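/- Let R be a commutative ring. The set PicS(R) of isomorphism classes of finitely generated projective R-modules E with rank_R(E) ≤ 1 (i.e. E_p = 0 or E_p ≅ R_p for every prime p), with operation [E][F] = [E⊗_R F], is a commutative inverse monoid with zero, in which the semigroup inverse of [E] is [E*] where E* = Hom_R(E, R). -/

import Mathlib

open scoped TensorProduct
set_option synthInstance.maxHeartbeats 1000000
set_option maxHeartbeats 1000000

variable {R : Type u} [CommRing R]

/-- `E` has rank at most one: for every prime `p`, `E_p = 0` or `E_p ≅ R_p`. -/
def RankLeOne (R : Type u) [CommRing R] (E : Type u) [AddCommGroup E] [Module R E] : Prop :=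
  ∀ (p : Ideal R) [p.IsPrime],
    Subsingleton (LocalizedModule p.primeCompl E) ∨
    Nonempty ((LocalizedModule p.primeCompl E) ≃ₗ[Localization p.primeCompl]
      (Localization p.primeCompl))

/-- `[E] ∈ PicS(R)`: `E` is a finitely generated projective `R`-module of rank `≤ 1`. -/
def MemPicS (R : Type u) [CommRing R] (E : Type u) [AddCommGroup E] [Module R E] : Prop :=
  Module.Finite R E ∧ Module.Projective R E ∧ RankLeOne R E

open Module in
theorem rk_iff (E : Type u) [AddCommGroup E] [Module R E] [Module.Finite R E]
    [Module.Projective R E] :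
    RankLeOne R E ↔ ∀ p : PrimeSpectrum R, rankAtStalk (R := R) E p ≤ 1 := by
  constructor
  · intro h p
    rcases h p.asIdeal with h | ⟨⟨e⟩⟩
    · rw [rankAtStalk, Module.finrank_zero_of_subsingleton]; exact zero_le_one
    · rw [rankAtStalk, e.finrank_eq, Module.finrank_self]
  · intro h p hp
    have hr := h ⟨p, hp⟩
    have : Module.Free (Localization.AtPrime p) (LocalizedModule p.primeCompl E) :=
      Module.free_of_flat_of_isLocalRing
    rcases Nat.le_one_iff_eq_zero_or_eq_one.mp hr with h | h
    · left
      exact (Module.finrank_eq_zero_iff_of_free (R := Localization.AtPrime p)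
        (M := LocalizedModule p.primeCompl E)).mp h
    · right
      exact ⟨(Module.nonempty_linearEquiv_of_finrank_eq_one
        (R := Localization.AtPrime p) (M := LocalizedModule p.primeCompl E) h).some.symm⟩

open Module in
theorem rk_dual (E : Type u) [AddCommGroup E] [Module R E] [Module.Finite R E]
    [Module.Projective R E] :
    rankAtStalk (R := R) (Module.Dual R E) = rankAtStalk (R := R) E := by
  ext p
  have : Module.FinitePresentation R E := Module.finitePresentation_of_projective R E
  have : Module.Free (Localization.AtPrime p.asIdeal)
      (LocalizedModule p.asIdeal.primeCompl E) := Module.free_of_flat_of_isLocalRing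
  let e := IsLocalizedModule.linearEquiv p.asIdeal.primeCompl
    (LocalizedModule.mkLinearMap p.asIdeal.primeCompl (E →ₗ[R] R))
    (IsLocalizedModule.mapExtendScalars p.asIdeal.primeCompl
      (LocalizedModule.mkLinearMap p.asIdeal.primeCompl E)
      (Algebra.linearMap R (Localization p.asIdeal.primeCompl)) (Localization p.asIdeal.primeCompl))
  let e' := e.extendScalarsOfIsLocalization p.asIdeal.primeCompl
    (Localization p.asIdeal.primeCompl)
  have h2 := Module.finrank_linearMap_self (Localization.AtPrime p.asIdeal)
    (Localization.AtPrime p.asIdeal) (LocalizedModule p.asIdeal.primeCompl E)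
  exact e'.finrank_eq.trans h2

theorem rk_mem_iff (E : Type u) [AddCommGroup E] [Module R E] :
    MemPicS R E ↔ Module.Finite R E ∧ Module.Projective R E ∧
      ∀ p : PrimeSpectrum R, Module.rankAtStalk (R := R) E p ≤ 1 := by
  constructor
  · rintro ⟨h1, h2, h3⟩; exact ⟨h1, h2, (rk_iff E).mp h3⟩
  · rintro ⟨h1, h2, h3⟩; exact ⟨h1, h2, (rk_iff E).mpr h3⟩

theorem mem_dual (E : Type u) [AddCommGroup E] [Module R E] (hE : MemPicS R E) :
    MemPicS R (Module.Dual R E) := by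
  rw [rk_mem_iff] at *
  obtain ⟨h1, h2, h3⟩ := hE
  refine ⟨inferInstance, inferInstance, ?_⟩
  rw [rk_dual]; exact h3

theorem inv_dual (E : Type u) [AddCommGroup E] [Module R E] (hE : MemPicS R E) :
    Nonempty ((E ⊗[R] (Module.Dual R E) ⊗[R] E) ≃ₗ[R] E) := by
  rw [rk_mem_iff] at hE
  obtain ⟨h1, h2, h3⟩ := hE
  let φ : (E ⊗[R] (Module.Dual R E) ⊗[R] E) →ₗ[R] E :=
    (TensorProduct.lid R E).toLinearMap ∘ₗ
      (contractRight R E).rTensor E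
  have hs : Function.Surjective φ := by
    intro x
    obtain ⟨s, hs⟩ := (Module.projective_def' (R := R) (P := E)).mp h2
    refine ⟨∑ e ∈ (s x).support, (x ⊗ₜ (Finsupp.lapply e ∘ₗ s)) ⊗ₜ e, ?_⟩
    have := DFunLike.congr_fun hs x
    simpa [φ, Finsupp.linearCombination_apply, Finsupp.sum] using this
  refine ⟨LinearEquiv.ofBijective φ
    (Module.bijective_of_surjective_of_rankAtStalk_eq hs fun m hm => ?_)⟩
  rw [Module.rankAtStalk_tensorProduct, Module.rankAtStalk_tensorProduct, rk_dual]
  have := h3 ⟨m, inferInstance⟩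
  simp only [Pi.mul_apply]
  rcases Nat.le_one_iff_eq_zero_or_eq_one.mp this with h | h <;> rw [h]

theorem half_unique (E X Y : Type u) [AddCommGroup E] [Module R E] [AddCommGroup X] [Module R X]
    [AddCommGroup Y] [Module R Y] (h1 : Nonempty ((E ⊗[R] Y ⊗[R] E) ≃ₗ[R] E))
    (h2 : Nonempty ((X ⊗[R] E ⊗[R] X) ≃ₗ[R] X)) :
    Nonempty (X ≃ₗ[R] X ⊗[R] (Y ⊗[R] E)) := by
  obtain ⟨a⟩ := h1
  obtain ⟨b⟩ := h2
  let c : E ≃ₗ[R] E ⊗[R] (Y ⊗[R] E) := a.symm ≪≫ₗ TensorProduct.assoc R E Y E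
  exact ⟨b.symm ≪≫ₗ (c.lTensor X).rTensor X ≪≫ₗ
    ((TensorProduct.assoc R X E (Y ⊗[R] E)).symm).rTensor X ≪≫ₗ
    TensorProduct.rightComm R (X ⊗[R] E) (Y ⊗[R] E) X ≪≫ₗ b.rTensor _⟩

/-- `PicS(R)`, the set of isomorphism classes of finitely generated
projective `R`-modules of rank `≤ 1` with `[E][F] = [E ⊗ F]`, is a commutative inverse
monoid with zero, the (semigroup) inverse of `[E]` being `[E*] = [Hom_R(E,R)]`:
it is closed under tensor products, the operation is commutative, `[R]` is an identity,
the class of the zero module is a zero element, `E*` satisfies the two inverse equations,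
and it is the unique such element (up to isomorphism). -/
theorem stmt10 (E F : Type u) [AddCommGroup E] [Module R E] [AddCommGroup F] [Module R F]
    (hE : MemPicS R E) (hF : MemPicS R F) :
    -- closure under the product
    MemPicS R (E ⊗[R] F) ∧
    -- commutativity
    Nonempty ((E ⊗[R] F) ≃ₗ[R] (F ⊗[R] E)) ∧
    -- `[R]` is the identity
    (MemPicS R R ∧ Nonempty ((R ⊗[R] E) ≃ₗ[R] E)) ∧
    -- the class of the zero module is a zero element
    (∀ (Z : Type u) [AddCommGroup Z] [Module R Z], Subsingleton Z →
      (MemPicS R Z ∧ Nonempty ((Z ⊗[R] E) ≃ₗ[R] Z))) ∧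
    -- the dual is a semigroup inverse …
    (MemPicS R (Module.Dual R E) ∧
      Nonempty ((E ⊗[R] (Module.Dual R E) ⊗[R] E) ≃ₗ[R] E) ∧
      Nonempty (((Module.Dual R E) ⊗[R] E ⊗[R] (Module.Dual R E)) ≃ₗ[R]
        (Module.Dual R E))) ∧
    -- … and it is the unique one, so `PicS(R)` is an inverse monoid
    (∀ (X : Type u) [AddCommGroup X] [Module R X], MemPicS R X →
      Nonempty ((E ⊗[R] X ⊗[R] E) ≃ₗ[R] E) →
      Nonempty ((X ⊗[R] E ⊗[R] X) ≃ₗ[R] X) →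
      Nonempty (X ≃ₗ[R] Module.Dual R E)) := by
  have hD := mem_dual E hE
  have i1 := inv_dual E hE
  have i2 : Nonempty (((Module.Dual R E) ⊗[R] E ⊗[R] (Module.Dual R E)) ≃ₗ[R]
        (Module.Dual R E)) := by
    obtain ⟨h1, h2, h3⟩ := hE
    obtain ⟨d⟩ := inv_dual _ hD
    exact ⟨((Module.evalEquiv R E).lTensor _).rTensor _ ≪≫ₗ d⟩
  refine ⟨?_, ⟨TensorProduct.comm R E F⟩, ⟨?_, ⟨TensorProduct.lid R E⟩⟩, ?_, ⟨hD, i1, i2⟩, ?_⟩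
  · rw [rk_mem_iff] at *
    obtain ⟨h1, h2, h3⟩ := hE
    obtain ⟨k1, k2, k3⟩ := hF
    refine ⟨inferInstance, inferInstance, fun p => ?_⟩
    rw [Module.rankAtStalk_tensorProduct]
    exact Nat.mul_le_mul (h3 p) (k3 p)
  · rw [rk_mem_iff]
    refine ⟨inferInstance, inferInstance, fun p => ?_⟩
    have := p.nontrivial
    rw [Module.rankAtStalk_self]; exact le_rfl
  · intro Z _ _ hZ
    refine ⟨?_, ?_⟩
    · rw [rk_mem_iff]
      refine ⟨inferInstance, inferInstance, fun p => ?_⟩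
      simp
    · have : Subsingleton (Z ⊗[R] E) := inferInstance
      exact ⟨0⟩
  · intro X _ _ _ j1 j2
    obtain ⟨a⟩ := half_unique E X (Module.Dual R E) i1 j2
    obtain ⟨b⟩ := half_unique E (Module.Dual R E) X j1 i2
    exact ⟨a ≪≫ₗ TensorProduct.leftComm R X (Module.Dual R E) E ≪≫ₗ b.symm⟩
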